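/- Let N, d, C be natural numbers at least 2, let p ∈ (0, ∞], q ∈ [1, ∞], let k be a natural number with 7 ≤ k ≤ d + 5, and let σ, δ > 0 satisfy σ/δ ≤ a_{p,q,d} · N^{−2/(k−6)}, where a_{p,q,d} = (1/(8√e)) · d^{−1/2 + [1/2 − 1/q]_− + [1/p − 1/2]_−} (with 1/∞ = 0). Then there is a universal constant C₀ such that for every (δ, q)-separated dataset D of size N with C classes in ℝ^d, there exists a feedforward ReLU neural network f : ℝ^d → ℝ of width k and depth at most C₀ · N · k · log₂(k) that (σ, p)-robustly memorizes D. -/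

import Mathlib

open scoped ENNReal BigOperators

noncomputable section

/-- A multilayer perceptron (feedforward ReLU network) with input dimension `m`
and output dimension `n`, given as a nonempty list of affine layers. -/
inductive MLP : ℕ → ℕ → Type
  | last : {m n : ℕ} → Matrix (Fin n) (Fin m) ℝ → (Fin n → ℝ) → MLP m n
  | cons : {m h n : ℕ} → Matrix (Fin h) (Fin m) ℝ → (Fin h → ℝ) → MLP h n → MLP m n

/-- Evaluation of an MLP: every affine layer except the last is followed by a
coordinatewise ReLU. -/
def MLP.eval : {m n : ℕ} → MLP m n → (Fin m → ℝ) → Fin n → ℝ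
  | _, _, .last W b, x => W.mulVec x + b
  | _, _, .cons W b rest, x => MLP.eval rest fun i => max ((W.mulVec x + b) i) 0

/-- Depth of an MLP: the number of affine layers. -/
def MLP.depth : {m n : ℕ} → MLP m n → ℕ
  | _, _, .last _ _ => 1
  | _, _, .cons _ _ rest => MLP.depth rest + 1

/-- Width of an MLP: the maximum of the hidden-layer dimensions. -/
def MLP.width : {m n : ℕ} → MLP m n → ℕ
  | _, _, .last _ _ => 0
  | _, _, @MLP.cons _ h _ _ _ rest => max h (MLP.width rest)

/-- The `l_p` (quasi-)norm on `ℝ^d`, for `p ∈ (0,∞]`. -/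
def lpNorm (p : ℝ≥0∞) {d : ℕ} (x : Fin d → ℝ) : ℝ :=
  if p = ⊤ then ⨆ i, |x i| else (∑ i, |x i| ^ p.toReal) ^ (1 / p.toReal)

/-- The `l_p` norm on `ℝ^d` with a real exponent `p`. -/
def lpNormR (p : ℝ) {d : ℕ} (x : Fin d → ℝ) : ℝ := (∑ i, |x i| ^ p) ^ (1 / p)

/-- `1/p`, with the convention `1/∞ = 0`. -/
def rinv (p : ℝ≥0∞) : ℝ := if p = ⊤ then 0 else 1 / p.toReal

/-- `c_p^+(d) = d^{[1/2 - 1/p]_+}`. -/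
def cplus (p : ℝ≥0∞) (d : ℕ) : ℝ := (d : ℝ) ^ max ((1 : ℝ) / 2 - rinv p) 0

/-- `c_p^-(d) = d^{[1/2 - 1/p]_-}`. -/
def cminus (p : ℝ≥0∞) (d : ℕ) : ℝ := (d : ℝ) ^ min ((1 : ℝ) / 2 - rinv p) 0

/-- A dataset is `(δ, q)`-separated if the minimal `l_q` distance between
differently labeled points equals `δ`. -/
def Separated {N d : ℕ} (q : ℝ≥0∞) (δ : ℝ) (X : Fin N → Fin d → ℝ) (Y : Fin N → ℕ) : Prop :=
  (∀ i j, Y i ≠ Y j → δ ≤ lpNorm q (X i - X j)) ∧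
    ∃ i j, Y i ≠ Y j ∧ lpNorm q (X i - X j) = δ

/-- `f` `(σ, p)`-robustly memorizes the dataset `(X, Y)`. -/
def RobustMem {N d : ℕ} (p : ℝ≥0∞) (σ : ℝ) (X : Fin N → Fin d → ℝ) (Y : Fin N → ℕ)
    (f : (Fin d → ℝ) → ℝ) : Prop :=
  ∀ i, ∀ x : Fin d → ℝ, lpNorm p (x - X i) ≤ σ → f x = (Y i : ℝ)

/-- A matrix `M` `(σ, k)`-preserves a dataset: Euclidean distances between points of
`σ`-neighborhoods (in `l₂`) of differently labeled data points do not decrease. -/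
def Preserves {N d m : ℕ} (σ : ℝ) (X : Fin N → Fin d → ℝ) (Y : Fin N → ℕ)
    (M : Matrix (Fin m) (Fin d) ℝ) : Prop :=
  ∀ i j, Y i ≠ Y j → ∀ a a' : Fin d → ℝ,
    lpNorm 2 (a - X i) ≤ σ → lpNorm 2 (a' - X j) ≤ σ →
      lpNorm 2 (a - a') ≤ lpNorm 2 (M.mulVec a - M.mulVec a')

/-- The `l₂ → l₂` (spectral) operator norm of a matrix. -/
def matOpNorm {m d : ℕ} (M : Matrix (Fin m) (Fin d) ℝ) : ℝ :=
  sSup {c | ∃ x : Fin d → ℝ, lpNorm 2 x ≤ 1 ∧ c = lpNorm 2 (M.mulVec x)}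

/-- Generalized binomial coefficient `C(s, m) = s(s-1)⋯(s-m+1)/m!`. -/
def gchoose (s : ℝ) (m : ℕ) : ℝ := (∏ i ∈ Finset.range m, (s - (i : ℝ))) / (m.factorial : ℝ)

theorem aux_mono {d : ℕ} (x : Fin d → ℝ) {a b : ℝ} (ha : 0 < a) (hab : a ≤ b) :
    (∑ i, |x i| ^ b) ^ (1 / b) ≤ (∑ i, |x i| ^ a) ^ (1 / a) := by
  have hb : 0 < b := ha.trans_le hab
  set A := ∑ i, |x i| ^ a with hA
  have hA0 : 0 ≤ A := Finset.sum_nonneg fun i _ => by positivity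
  set M := A ^ (1 / a) with hM
  have hM0 : 0 ≤ M := by positivity
  have hMa : M ^ a = A := by
    rw [hM, ← Real.rpow_mul hA0, one_div_mul_cancel ha.ne', Real.rpow_one]
  have hi : ∀ i, |x i| ≤ M := by
    intro i
    rw [← Real.rpow_le_rpow_iff (abs_nonneg _) hM0 ha, hMa]
    exact Finset.single_le_sum (f := fun i => |x i| ^ a) (fun i _ => by positivity)
      (Finset.mem_univ i)
  have hsum : ∑ i, |x i| ^ b ≤ M ^ b := by
    have h1 : ∀ i, |x i| ^ b ≤ |x i| ^ a * M ^ (b - a) := by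
      intro i
      have : |x i| ^ b = |x i| ^ a * |x i| ^ (b - a) := by
        rw [← Real.rpow_add_of_nonneg (abs_nonneg _) ha.le (by linarith)]
        congr 1; ring
      rw [this]
      gcongr
      · exact hi i
    calc ∑ i, |x i| ^ b ≤ ∑ i, |x i| ^ a * M ^ (b - a) := Finset.sum_le_sum fun i _ => h1 i
      _ = M ^ a * M ^ (b - a) := by rw [← Finset.sum_mul, ← hA, hMa]
      _ = M ^ b := by
        rw [← Real.rpow_add_of_nonneg hM0 ha.le (by linarith)]
        congr 1; ring
  calc (∑ i, |x i| ^ b) ^ (1 / b) ≤ (M ^ b) ^ (1 / b) := by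
        apply Real.rpow_le_rpow _ hsum (by positivity)
        exact Finset.sum_nonneg fun i _ => by positivity
    _ = M := by rw [← Real.rpow_mul hM0, mul_one_div_cancel hb.ne', Real.rpow_one]

theorem aux_holder {d : ℕ} (x : Fin d → ℝ) {a b : ℝ} (ha : 0 < a) (hab : a ≤ b) :
    (∑ i, |x i| ^ a) ^ (1 / a) ≤ (d : ℝ) ^ (1 / a - 1 / b) * (∑ i, |x i| ^ b) ^ (1 / b) := by
  have hb : 0 < b := ha.trans_le hab
  have h := Real.rpow_sum_le_const_mul_sum_rpow_of_nonneg (s := Finset.univ)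
    (f := fun i => |x i| ^ a) (p := b / a) (by rwa [one_le_div ha]) (fun i _ => by positivity)
  have e : ∀ i, (|x i| ^ a) ^ (b / a) = |x i| ^ b := by
    intro i
    rw [← Real.rpow_mul (abs_nonneg _)]; congr 1; field_simp
  simp only [e, Finset.card_univ, Fintype.card_fin] at h
  have hA0 : 0 ≤ ∑ i, |x i| ^ a := Finset.sum_nonneg fun i _ => by positivity
  have hB0 : 0 ≤ ∑ i, |x i| ^ b := Finset.sum_nonneg fun i _ => by positivity
  have h2 := Real.rpow_le_rpow (by positivity) h (by positivity : 0 ≤ 1 / b)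
  rw [← Real.rpow_mul hA0, Real.mul_rpow (by positivity) hB0, ← Real.rpow_mul (by positivity)] at h2
  have e1 : b / a * (1 / b) = 1 / a := by field_simp
  have e2 : (b / a - 1) * (1 / b) = 1 / a - 1 / b := by field_simp
  rwa [e1, e2] at h2

/-- The Euclidean norm as a square root. -/
def nrm {d : ℕ} (x : Fin d → ℝ) : ℝ := Real.sqrt (∑ i, x i ^ 2)

theorem nrm_eq {d : ℕ} (x : Fin d → ℝ) : nrm x = (∑ i, |x i| ^ (2 : ℝ)) ^ (1 / (2 : ℝ)) := by
  rw [nrm, Real.sqrt_eq_rpow]; simp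

theorem nrm_sq {d : ℕ} (x : Fin d → ℝ) : nrm x ^ 2 = ∑ i, x i ^ 2 :=
  Real.sq_sqrt (Finset.sum_nonneg fun _ _ => sq_nonneg _)

theorem abs_le_nrm {d : ℕ} (x : Fin d → ℝ) (i : Fin d) : |x i| ≤ nrm x := by
  rw [nrm]
  apply Real.abs_le_sqrt
  exact Finset.single_le_sum (f := fun i => x i ^ 2) (fun i _ => sq_nonneg _) (Finset.mem_univ i)

theorem lpP {d : ℕ} (hd : 2 ≤ d) (p : ℝ≥0∞) (hp : 0 < p) (x : Fin d → ℝ) :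
    nrm x ≤ (d : ℝ) ^ (-min (rinv p - 1 / 2) 0) * lpNorm p x := by
  have hd0 : (0 : ℝ) < d := by positivity
  by_cases ht : p = ⊤
  · simp only [rinv, lpNorm, ht, if_true]
    have hm : min ((0 : ℝ) - 1 / 2) 0 = -(1 / 2) := by norm_num
    rw [hm, neg_neg, ← Real.sqrt_eq_rpow]
    set M := ⨆ i, |x i|
    have hi : ∀ i, |x i| ≤ M := fun i => le_ciSup (f := fun i => |x i|) (Set.finite_range _).bddAbove i
    have hM0 : 0 ≤ M := (abs_nonneg _).trans (hi ⟨0, by omega⟩)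
    rw [nrm]
    apply Real.sqrt_le_iff.2 ⟨by positivity, _⟩
    rw [mul_pow, Real.sq_sqrt hd0.le]
    calc ∑ i, x i ^ 2 ≤ ∑ _i : Fin d, M ^ 2 := by
          apply Finset.sum_le_sum; intro i _
          rw [← sq_abs]; gcongr; exact hi i
      _ = d * M ^ 2 := by simp
  · have hp0 : 0 < p.toReal := ENNReal.toReal_pos hp.ne' ht
    simp only [rinv, lpNorm, ht, if_false, nrm_eq]
    rcases le_total p.toReal 2 with h | h
    · have : (1 : ℝ) / 2 ≤ 1 / p.toReal := one_div_le_one_div_of_le hp0 h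
      rw [min_eq_right (by linarith), neg_zero, Real.rpow_zero, one_mul]
      exact aux_mono x hp0 h
    · have : 1 / p.toReal ≤ (1 : ℝ) / 2 := one_div_le_one_div_of_le (by norm_num) h
      rw [min_eq_left (by linarith), neg_sub]
      exact aux_holder x (by norm_num) h

theorem lpQ {d : ℕ} (hd : 2 ≤ d) (q : ℝ≥0∞) (hq : 0 < q) (x : Fin d → ℝ) :
    (d : ℝ) ^ (min (1 / 2 - rinv q) 0) * lpNorm q x ≤ nrm x := by
  have hd0 : (0 : ℝ) < d := by positivity
  by_cases ht : q = ⊤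
  · simp only [rinv, lpNorm, ht, if_true]
    have hm : min ((1 / 2 : ℝ) - 0) 0 = 0 := by norm_num
    rw [hm, Real.rpow_zero, one_mul]
    have : Nonempty (Fin d) := ⟨⟨0, by omega⟩⟩
    exact ciSup_le (abs_le_nrm x)
  · have hp0 : 0 < q.toReal := ENNReal.toReal_pos hq.ne' ht
    simp only [rinv, lpNorm, ht, if_false, nrm_eq]
    rcases le_total q.toReal 2 with h | h
    · have : (1 : ℝ) / 2 ≤ 1 / q.toReal := one_div_le_one_div_of_le hp0 h
      rw [min_eq_left (by linarith)]
      have := aux_holder x hp0 h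
      rw [← neg_sub, Real.rpow_neg hd0.le, inv_mul_le_iff₀ (by positivity)]
      exact this
    · have : 1 / q.toReal ≤ (1 : ℝ) / 2 := one_div_le_one_div_of_le (by norm_num) h
      rw [min_eq_right (by linarith), Real.rpow_zero, one_mul]
      exact aux_mono x (by norm_num) h

open MeasureTheory ProbabilityTheory in
theorem gauss_Icc (t : ℝ) (_ht : 0 ≤ t) : (gaussianReal 0 1) (Set.Icc (-t) t) ≤ ENNReal.ofReal t := by
  rw [gaussianReal_apply _ one_ne_zero]
  have hpdf : ∀ x, gaussianPDF 0 1 x ≤ ENNReal.ofReal (1 / 2) := by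
    intro x
    rw [gaussianPDF]
    apply ENNReal.ofReal_le_ofReal
    rw [gaussianPDFReal]
    have h1 : Real.exp (-(x - 0) ^ 2 / (2 * ((1 : NNReal) : ℝ))) ≤ 1 := by
      rw [Real.exp_le_one_iff]
      apply div_nonpos_of_nonpos_of_nonneg
      · nlinarith [sq_nonneg (x - 0)]
      · simp
    have h2 : (2 : ℝ) ≤ Real.sqrt (2 * Real.pi * ((1 : NNReal) : ℝ)) := by
      apply Real.le_sqrt_of_sq_le
      have := Real.pi_gt_three
      simp only [NNReal.coe_one]; linarith
    have h3 : (Real.sqrt (2 * Real.pi * ((1 : NNReal) : ℝ)))⁻¹ ≤ 1 / 2 := by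
      rw [one_div]; exact inv_anti₀ (by norm_num) h2
    calc _ ≤ (1 / 2 : ℝ) * 1 := by
          apply mul_le_mul h3 h1 (Real.exp_pos _).le (by norm_num)
      _ = 1 / 2 := by ring
  calc ∫⁻ x in Set.Icc (-t) t, gaussianPDF 0 1 x
      ≤ ∫⁻ _x in Set.Icc (-t) t, ENNReal.ofReal (1 / 2) := lintegral_mono hpdf
    _ = ENNReal.ofReal t := by
      rw [setLIntegral_const, Real.volume_Icc, ← ENNReal.ofReal_mul (by norm_num)]
      congr 1; ring

open MeasureTheory ProbabilityTheory in
theorem small_ball {d : ℕ} (u : EuclideanSpace ℝ (Fin d)) (hu : u ≠ 0) (t : ℝ) (ht : 0 ≤ t) :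
    (stdGaussian (EuclideanSpace ℝ (Fin d))).real {r | |inner ℝ u r| ≤ t * ‖u‖} ≤ t := by
  have hn : 0 < ‖u‖ := norm_pos_iff.2 hu
  set L : StrongDual ℝ (EuclideanSpace ℝ (Fin d)) := innerSL ℝ (‖u‖⁻¹ • u) with hL
  have hLn : ‖L‖ = 1 := by
    rw [hL, innerSL_apply_norm, norm_smul, norm_inv, norm_norm, inv_mul_cancel₀ hn.ne']
  have hmap := IsGaussian.map_eq_gaussianReal (μ := stdGaussian (EuclideanSpace ℝ (Fin d))) L
  rw [integral_strongDual_stdGaussian, variance_dual_stdGaussian, hLn] at hmap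
  have hset : {r : EuclideanSpace ℝ (Fin d) | |inner ℝ u r| ≤ t * ‖u‖} = Set.preimage L (Set.Icc (-t) t) := by
    ext r
    simp only [Set.mem_ofPred_eq, Set.mem_preimage, Set.mem_Icc, ← abs_le, hL, innerSL_apply_apply,
      real_inner_smul_left, abs_mul, abs_inv, abs_norm]
    rw [inv_mul_le_iff₀ hn, mul_comm]
  rw [hset, Measure.real]
  apply ENNReal.toReal_le_of_le_ofReal ht
  rw [← Measure.map_apply L.continuous.measurable measurableSet_Icc, hmap]
  simpa using gauss_Icc t ht

open MeasureTheory ProbabilityTheory in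
theorem second_moment (d : ℕ) :
    Integrable (fun r : EuclideanSpace ℝ (Fin d) => ‖r‖ ^ 2) (stdGaussian (EuclideanSpace ℝ (Fin d))) ∧
    ∫ r, ‖r‖ ^ 2 ∂(stdGaussian (EuclideanSpace ℝ (Fin d))) = d := by
  have hfun : (fun r : EuclideanSpace ℝ (Fin d) => ‖r‖ ^ 2) =
      fun r => ∑ i, (innerSL ℝ (EuclideanSpace.basisFun (Fin d) ℝ i) r) ^ 2 := by
    ext r
    rw [EuclideanSpace.real_norm_sq_eq]
    simp [EuclideanSpace.inner_single_left]
  have hmem : ∀ L : StrongDual ℝ (EuclideanSpace ℝ (Fin d)),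
      MemLp L 2 (stdGaussian (EuclideanSpace ℝ (Fin d))) := fun L =>
    IsGaussian.memLp_dual _ L 2 (by simp)
  have hsqint : ∀ L : StrongDual ℝ (EuclideanSpace ℝ (Fin d)),
      Integrable (fun r => L r ^ 2) (stdGaussian (EuclideanSpace ℝ (Fin d))) := fun L =>
    (hmem L).integrable_sq
  rw [hfun]
  refine ⟨integrable_finsetSum _ fun i _ => hsqint _, ?_⟩
  rw [integral_finsetSum _ fun i _ => hsqint _]
  have : ∀ i : Fin d, ∫ r, (innerSL ℝ (EuclideanSpace.basisFun (Fin d) ℝ i) r) ^ 2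
      ∂(stdGaussian (EuclideanSpace ℝ (Fin d))) = 1 := by
    intro i
    have h := variance_dual_stdGaussian (E := EuclideanSpace ℝ (Fin d))
      (innerSL ℝ (EuclideanSpace.basisFun (Fin d) ℝ i))
    rw [variance_of_integral_eq_zero (by fun_prop) (integral_strongDual_stdGaussian _),
      innerSL_apply_norm] at h
    simpa using h
  rw [Finset.sum_congr rfl fun i _ => this i]; simp

open MeasureTheory ProbabilityTheory in
open scoped Classical in
/-- One random row kills all but a fraction of the vectors. -/
theorem one_row {d : ℕ} (hd : 0 < d) {ι : Type*} (S : Finset ι) (u : ι → EuclideanSpace ℝ (Fin d))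
    (hu : ∀ i ∈ S, u i ≠ 0) (t : ℝ) (ht : 0 < t) :
    ∃ r : EuclideanSpace ℝ (Fin d), ‖r‖ ^ 2 ≤ 2 * d ∧
      ((S.filter fun i => |inner ℝ (u i) r| ≤ t * ‖u i‖).card : ℝ) ≤ 2 * t * S.card := by
  rcases S.eq_empty_or_nonempty with rfl | hS
  · exact ⟨0, by simp, by simp⟩
  have hS0 : (0 : ℝ) < S.card := by exact_mod_cast hS.card_pos
  have hd0 : (0 : ℝ) < d := by exact_mod_cast hd
  let μ := stdGaussian (EuclideanSpace ℝ (Fin d))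
  let B : ι → Set (EuclideanSpace ℝ (Fin d)) := fun i => {r | |inner ℝ (u i) r| ≤ t * ‖u i‖}
  have hB : ∀ i, MeasurableSet (B i) := fun i =>
    measurableSet_le (by fun_prop) (by fun_prop)
  have hBint : ∀ i, Integrable ((B i).indicator (fun _ => (1 : ℝ))) μ := fun i =>
    (integrable_const _).indicator (hB i)
  obtain ⟨hi2, he2⟩ := second_moment d
  let f : EuclideanSpace ℝ (Fin d) → ℝ := fun r =>
    (t * S.card)⁻¹ * ∑ i ∈ S, (B i).indicator (fun _ => (1 : ℝ)) r + (d : ℝ)⁻¹ * ‖r‖ ^ 2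
  have hint1 : Integrable (fun r => (t * S.card)⁻¹ * ∑ i ∈ S, (B i).indicator (fun _ => (1 : ℝ)) r) μ :=
    (integrable_finsetSum _ fun i _ => hBint i).const_mul _
  have hfint : Integrable f μ := hint1.add (hi2.const_mul _)
  obtain ⟨r, hr⟩ := exists_le_integral hfint
  have hE : ∫ r, f r ∂μ ≤ 2 := by
    have : ∫ r, f r ∂μ = (t * S.card)⁻¹ * ∑ i ∈ S, μ.real (B i) + (d : ℝ)⁻¹ * d := by
      simp only [f]
      rw [integral_add hint1 (hi2.const_mul _), integral_const_mul, integral_const_mul, he2,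
        integral_finsetSum _ fun i _ => hBint i]
      congr 2
      apply Finset.sum_congr rfl
      intro i _
      rw [integral_indicator_const _ (hB i)]; simp
    rw [this]
    have h1 : ∑ i ∈ S, μ.real (B i) ≤ t * S.card := by
      calc ∑ i ∈ S, μ.real (B i) ≤ ∑ i ∈ S, t :=
            Finset.sum_le_sum fun i hi => small_ball (u i) (hu i hi) t ht.le
        _ = t * S.card := by simp [mul_comm]
    have h2 : (t * S.card)⁻¹ * ∑ i ∈ S, μ.real (B i) ≤ 1 := by
      rw [inv_mul_le_iff₀ (by positivity), mul_one]; exact h1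
    rw [inv_mul_cancel₀ hd0.ne']
    linarith
  have hcount : ∑ i ∈ S, (B i).indicator (fun _ => (1 : ℝ)) r =
      ((S.filter fun i => |inner ℝ (u i) r| ≤ t * ‖u i‖).card : ℝ) := by
    rw [Finset.card_filter]
    push_cast
    apply Finset.sum_congr rfl
    intro i _
    simp [B, Set.indicator_apply]
  have hfr : f r ≤ 2 := hr.trans hE
  simp only [f, hcount] at hfr
  set c := ((S.filter fun i => |inner ℝ (u i) r| ≤ t * ‖u i‖).card : ℝ)
  have hc0 : 0 ≤ (t * S.card)⁻¹ * c := by positivity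
  have hn0 : 0 ≤ (d : ℝ)⁻¹ * ‖r‖ ^ 2 := by positivity
  refine ⟨r, ?_, ?_⟩
  · have : (d : ℝ)⁻¹ * ‖r‖ ^ 2 ≤ 2 := by linarith
    rw [inv_mul_le_iff₀ hd0] at this; linarith
  · have : (t * S.card)⁻¹ * c ≤ 2 := by linarith
    rw [inv_mul_le_iff₀ (by positivity)] at this; linarith

open scoped Classical in
theorem many_rows {d : ℕ} (hd : 0 < d) {ι : Type*} (t : ℝ) (ht : 0 < t)
    (u : ι → EuclideanSpace ℝ (Fin d)) (m : ℕ) (S : Finset ι)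
    (hu : ∀ i ∈ S, u i ≠ 0) :
    ∃ r : Fin m → EuclideanSpace ℝ (Fin d), (∀ l, ‖r l‖ ^ 2 ≤ 2 * d) ∧
      ((S.filter fun i => ∀ l, |inner ℝ (u i) (r l)| ≤ t * ‖u i‖).card : ℝ) ≤
        (2 * t) ^ m * S.card := by
  induction m generalizing S with
  | zero => exact ⟨Fin.elim0, fun l => l.elim0, by simp⟩
  | succ m ih =>
    obtain ⟨r0, h0, hc0⟩ := one_row hd S u hu t ht
    obtain ⟨r, hr, hc⟩ := ih (S.filter fun i => |inner ℝ (u i) r0| ≤ t * ‖u i‖)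
      (fun i hi => hu i (Finset.mem_filter.1 hi).1)
    refine ⟨Fin.cons r0 r, ?_, ?_⟩
    · intro l; refine Fin.cases ?_ ?_ l
      · simpa using h0
      · intro l; simpa using hr l
    · rw [Finset.filter_filter] at hc
      simp only [Fin.forall_fin_succ, Fin.cons_zero, Fin.cons_succ]
      calc _ ≤ (2 * t) ^ m * _ := hc
        _ ≤ (2 * t) ^ m * (2 * t * S.card) := by gcongr
        _ = _ := by ring

/-- `Reach K k n F`: the map `F` is computed on `K` by `n` hidden layers of width `k`. -/
def Reach {d : ℕ} (K : Set (Fin d → ℝ)) (k n : ℕ) (F : (Fin d → ℝ) → Fin k → ℝ) : Prop :=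
  ∀ tail : MLP k 1, ∃ net : MLP d 1, net.depth = tail.depth + n ∧ net.width = max k tail.width ∧
    ∀ x ∈ K, net.eval x = tail.eval (F x)

/-- `g` is an affine function of the state `F`. -/
def AffOf {d k : ℕ} (K : Set (Fin d → ℝ)) (F : (Fin d → ℝ) → Fin k → ℝ)
    (g : (Fin d → ℝ) → ℝ) : Prop :=
  ∃ (w : Fin k → ℝ) (b : ℝ), ∀ x ∈ K, g x = ∑ j, w j * F x j + b

section
variable {d k : ℕ} {K : Set (Fin d → ℝ)} {F : (Fin d → ℝ) → Fin k → ℝ}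

theorem AffOf.const (c : ℝ) : AffOf K F (fun _ => c) := ⟨0, c, by simp⟩

theorem AffOf.coord (i : Fin k) : AffOf K F (fun x => F x i) :=
  ⟨Pi.single i 1, 0, by simp [Pi.single_apply]⟩

theorem AffOf.add {g g' : (Fin d → ℝ) → ℝ} (h : AffOf K F g) (h' : AffOf K F g') :
    AffOf K F (fun x => g x + g' x) := by
  obtain ⟨w, b, h⟩ := h
  obtain ⟨w', b', h'⟩ := h'
  refine ⟨w + w', b + b', fun x hx => ?_⟩
  simp only [h x hx, h' x hx, Pi.add_apply, add_mul, Finset.sum_add_distrib]; ring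

theorem AffOf.smul {g : (Fin d → ℝ) → ℝ} (c : ℝ) (h : AffOf K F g) :
    AffOf K F (fun x => c * g x) := by
  obtain ⟨w, b, h⟩ := h
  refine ⟨c • w, c * b, fun x hx => ?_⟩
  simp only [h x hx, Pi.smul_apply, smul_eq_mul, mul_assoc, mul_add, Finset.mul_sum]

theorem AffOf.sub {g g' : (Fin d → ℝ) → ℝ} (h : AffOf K F g) (h' : AffOf K F g') :
    AffOf K F (fun x => g x - g' x) := by
  have := h.add (h'.smul (-1))
  simpa [sub_eq_add_neg] using this

theorem Reach.step {n : ℕ} (h : Reach K k n F) {G : (Fin d → ℝ) → Fin k → ℝ}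
    (hG : ∀ i, ∃ g, AffOf K F g ∧ ∀ x ∈ K, G x i = max (g x) 0) : Reach K k (n + 1) G := by
  choose g hg hGg using hG
  choose w b hwb using hg
  intro tail
  obtain ⟨net, hd, hw, he⟩ := h (MLP.cons (Matrix.of w) b tail)
  refine ⟨net, ?_, ?_, ?_⟩
  · rw [hd]; simp only [MLP.depth]; ring
  · rw [hw]; simp [MLP.width]
  · intro x hx
    rw [he x hx]
    simp only [MLP.eval]
    congr 1
    ext i
    rw [hGg i x hx, hwb i x hx]
    simp [Matrix.mulVec, dotProduct]

theorem Reach.first {G : (Fin d → ℝ) → Fin k → ℝ}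
    (hG : ∀ i, ∃ g, AffOf K (fun x => x) g ∧ ∀ x ∈ K, G x i = max (g x) 0) : Reach K k 1 G := by
  choose g hg hGg using hG
  choose w b hwb using hg
  intro tail
  refine ⟨MLP.cons (Matrix.of w) b tail, ?_, ?_, ?_⟩
  · simp [MLP.depth]
  · simp [MLP.width]
  · intro x hx
    simp only [MLP.eval]
    congr 1
    ext i
    rw [hGg i x hx, hwb i x hx]
    simp [Matrix.mulVec, dotProduct]

theorem Reach.final {n : ℕ} (h : Reach K k n F) {g : (Fin d → ℝ) → ℝ} (hg : AffOf K F g) :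
    ∃ net : MLP d 1, net.depth = n + 1 ∧ net.width = k ∧ ∀ x ∈ K, net.eval x 0 = g x := by
  obtain ⟨w, b, hwb⟩ := hg
  obtain ⟨net, hd, hw, he⟩ := h (MLP.last (Matrix.of fun _ => w) (fun _ => b))
  refine ⟨net, ?_, ?_, ?_⟩
  · rw [hd]; simp only [MLP.depth]; ring
  · rw [hw]; simp [MLP.width]
  · intro x hx
    rw [he x hx, hwb x hx]
    simp [MLP.eval, Matrix.mulVec, dotProduct]

end

/-- The state of the computation: carried coordinates, three registers, and the output. -/
def st {m : ℕ} (z : Fin m → ℝ) (s a b v : ℝ) : Fin (m + 6) → ℝ :=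
  Fin.append z ![s, a, b, v, 0, 0]

section
variable {d m : ℕ} {K : Set (Fin d → ℝ)} {Z : (Fin d → ℝ) → Fin m → ℝ}
  {s a b v : (Fin d → ℝ) → ℝ}

theorem AffOf.regZ (l : Fin m) :
    AffOf K (fun x => st (Z x) (s x) (a x) (b x) (v x)) (fun x => Z x l) := by
  have := AffOf.coord (K := K) (F := fun x => st (Z x) (s x) (a x) (b x) (v x)) (Fin.castAdd 6 l)
  simpa [st] using this

theorem AffOf.regS : AffOf K (fun x => st (Z x) (s x) (a x) (b x) (v x)) s := by
  have := AffOf.coord (K := K) (F := fun x => st (Z x) (s x) (a x) (b x) (v x)) (Fin.natAdd m 0)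
  simp only [st, Fin.append_right] at this
  exact this

theorem AffOf.regA : AffOf K (fun x => st (Z x) (s x) (a x) (b x) (v x)) a := by
  have := AffOf.coord (K := K) (F := fun x => st (Z x) (s x) (a x) (b x) (v x)) (Fin.natAdd m 1)
  simp only [st, Fin.append_right] at this
  exact this

theorem AffOf.regB : AffOf K (fun x => st (Z x) (s x) (a x) (b x) (v x)) b := by
  have := AffOf.coord (K := K) (F := fun x => st (Z x) (s x) (a x) (b x) (v x)) (Fin.natAdd m 2)
  simp only [st, Fin.append_right] at this
  exact this

theorem AffOf.regV : AffOf K (fun x => st (Z x) (s x) (a x) (b x) (v x)) v := by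
  have := AffOf.coord (K := K) (F := fun x => st (Z x) (s x) (a x) (b x) (v x)) (Fin.natAdd m 3)
  simp only [st, Fin.append_right] at this
  exact this

theorem st_coords {k : ℕ} {F : (Fin d → ℝ) → Fin k → ℝ}
    (hz : ∀ l, ∃ g, AffOf K F g ∧ ∀ x ∈ K, Z x l = max (g x) 0)
    (hs : ∃ g, AffOf K F g ∧ ∀ x ∈ K, s x = max (g x) 0)
    (ha : ∃ g, AffOf K F g ∧ ∀ x ∈ K, a x = max (g x) 0)
    (hb : ∃ g, AffOf K F g ∧ ∀ x ∈ K, b x = max (g x) 0)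
    (hv : ∃ g, AffOf K F g ∧ ∀ x ∈ K, v x = max (g x) 0) (i : Fin (m + 6)) :
    ∃ g, AffOf K F g ∧ ∀ x ∈ K, st (Z x) (s x) (a x) (b x) (v x) i = max (g x) 0 := by
  have h0 : ∃ g, AffOf K F g ∧ ∀ x ∈ K, (0 : ℝ) = max (g x) 0 :=
    ⟨fun _ => 0, AffOf.const 0, by simp⟩
  refine Fin.addCases (fun l => ?_) (fun j => ?_) i
  · simpa only [st, Fin.append_left] using hz l
  · simp only [st, Fin.append_right]
    fin_cases j
    exacts [hs, ha, hb, hv, h0, h0]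

/-- Keep a nonnegative quantity. -/
theorem keep {k : ℕ} {F : (Fin d → ℝ) → Fin k → ℝ} {g : (Fin d → ℝ) → ℝ} (h : AffOf K F g)
    (h0 : ∀ x ∈ K, 0 ≤ g x) : ∃ g', AffOf K F g' ∧ ∀ x ∈ K, g x = max (g' x) 0 :=
  ⟨g, h, fun x hx => (max_eq_left (h0 x hx)).symm⟩

theorem reluOf {k : ℕ} {F : (Fin d → ℝ) → Fin k → ℝ} {g : (Fin d → ℝ) → ℝ} (h : AffOf K F g) :
    ∃ g', AffOf K F g' ∧ ∀ x ∈ K, max (g x) 0 = max (g' x) 0 :=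
  ⟨g, h, fun _ _ => rfl⟩

/-- Distance of a coordinate to the interval `[c - e, c + e]`. -/
def tau (e c z : ℝ) : ℝ := max (z - (c + e)) 0 + max ((c - e) - z) 0

theorem tau_nonneg (e c z : ℝ) : 0 ≤ tau e c z := add_nonneg (le_max_right _ _) (le_max_right _ _)

theorem tau_eq_zero {e c z : ℝ} (h : |z - c| ≤ e) : tau e c z = 0 := by
  rw [abs_le] at h
  rw [tau, max_eq_right (by linarith), max_eq_right (by linarith), add_zero]

theorem le_tau {e η c z : ℝ} (h : e + η ≤ |z - c|) : η ≤ tau e c z := by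
  have h1 := le_max_left (z - (c + e)) 0
  have h2 := le_max_left ((c - e) - z) 0
  have h3 := le_max_right (z - (c + e)) 0
  have h4 := le_max_right ((c - e) - z) 0
  rw [tau]
  rcases abs_cases (z - c) with h' | h' <;> linarith

theorem reach_tau {n : ℕ} (e c : ℝ) (l : Fin m) (hZ : ∀ x ∈ K, ∀ l, 0 ≤ Z x l)
    (hs : ∀ x ∈ K, 0 ≤ s x) (hv : ∀ x ∈ K, 0 ≤ v x)
    (h : Reach K (m + 6) n fun x => st (Z x) (s x) 0 0 (v x)) :
    Reach K (m + 6) (n + 2) fun x => st (Z x) (s x + tau e c (Z x l)) 0 0 (v x) := by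
  have h1 : Reach K (m + 6) (n + 1) fun x => st (Z x) (s x) (max (Z x l - (c + e)) 0)
      (max ((c - e) - Z x l) 0) (v x) := by
    refine h.step (st_coords (fun l' => keep (AffOf.regZ l') fun x hx => hZ x hx l') (keep AffOf.regS hs)
      (reluOf ((AffOf.regZ l).sub (AffOf.const _))) (reluOf ((AffOf.const _).sub (AffOf.regZ l)))
      (keep AffOf.regV hv))
  refine h1.step (st_coords (fun l' => keep (AffOf.regZ l') fun x hx => hZ x hx l')
    (keep (AffOf.regS.add (AffOf.regA.add AffOf.regB)) fun x hx => add_nonneg (hs x hx) (tau_nonneg _ _ _))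
    (keep (AffOf.const 0) fun _ _ => le_rfl) (keep (AffOf.const 0) fun _ _ => le_rfl)
    (keep AffOf.regV hv))

theorem reach_sum {n : ℕ} (e : ℝ) (c : Fin m → ℝ) (L : List (Fin m))
    (hZ : ∀ x ∈ K, ∀ l, 0 ≤ Z x l)
    (hs : ∀ x ∈ K, 0 ≤ s x) (hv : ∀ x ∈ K, 0 ≤ v x)
    (h : Reach K (m + 6) n fun x => st (Z x) (s x) 0 0 (v x)) :
    Reach K (m + 6) (n + 2 * L.length) fun x =>
      st (Z x) (s x + (L.map fun l => tau e (c l) (Z x l)).sum) 0 0 (v x) := by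
  induction L generalizing s n with
  | nil => simpa using h
  | cons l L ih =>
    have := ih (fun x hx => add_nonneg (hs x hx) (tau_nonneg e (c l) (Z x l)))
      (reach_tau e (c l) l hZ hs hv h)
    simp only [List.map_cons, List.sum_cons, List.length_cons, ← add_assoc]
    have e1 : n + 2 + 2 * L.length = n + 2 * (L.length + 1) := by ring
    rw [e1] at this
    exact this

/-- Processing one data point. -/
theorem reach_point {n : ℕ} (e y κ : ℝ) (c : Fin m → ℝ)
    (hZ : ∀ x ∈ K, ∀ l, 0 ≤ Z x l) (hv : ∀ x ∈ K, 0 ≤ v x)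
    (h : Reach K (m + 6) n fun x => st (Z x) 0 0 0 (v x)) :
    Reach K (m + 6) (n + (2 * m + 3)) fun x =>
      st (Z x) 0 0 0 (max (v x) (max (y - κ * ∑ l, tau e (c l) (Z x l)) 0)) := by
  have h1 := reach_sum e c (List.finRange m) hZ (s := fun _ => 0) (fun _ _ => le_rfl) hv h
  have hsum : ∀ x, ((List.finRange m).map fun l => tau e (c l) (Z x l)).sum =
      ∑ l, tau e (c l) (Z x l) := by
    intro x
    rw [← List.ofFn_eq_map, List.sum_ofFn]
  simp only [hsum, zero_add, List.length_finRange] at h1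
  set S : (Fin d → ℝ) → ℝ := fun x => ∑ l, tau e (c l) (Z x l)
  have z0 : ∀ {F : (Fin d → ℝ) → Fin (m + 6) → ℝ},
      ∃ g, AffOf K F g ∧ ∀ x ∈ K, (0 : ℝ) = max (g x) 0 :=
    keep (AffOf.const 0) fun _ _ => le_rfl
  have h2 : Reach K (m + 6) (n + 2 * m + 1) fun x => st (Z x) 0 (max (y - κ * S x) 0) 0 (v x) :=
    h1.step (st_coords (fun l' => keep (AffOf.regZ l') fun x hx => hZ x hx l') z0
      (reluOf ((AffOf.const y).sub (AffOf.regS.smul κ))) z0 (keep AffOf.regV hv))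
  have h3 : Reach K (m + 6) (n + 2 * m + 1 + 1) fun x =>
      st (Z x) 0 (max (max (y - κ * S x) 0 - v x) 0) 0 (v x) :=
    h2.step (st_coords (fun l' => keep (AffOf.regZ l') fun x hx => hZ x hx l') z0
      (reluOf (AffOf.regA.sub AffOf.regV)) z0 (keep AffOf.regV hv))
  have h4 : Reach K (m + 6) (n + 2 * m + 1 + 1 + 1) fun x =>
      st (Z x) 0 0 0 (v x + max (max (y - κ * S x) 0 - v x) 0) :=
    h3.step (st_coords (fun l' => keep (AffOf.regZ l') fun x hx => hZ x hx l') z0 z0 z0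
      (keep (AffOf.regV.add AffOf.regA) fun x hx => add_nonneg (hv x hx) (le_max_right _ _)))
  have e1 : n + 2 * m + 1 + 1 + 1 = n + (2 * m + 3) := by ring
  rw [e1] at h4
  have e2 : ∀ v w : ℝ, v + max (w - v) 0 = max v w := by
    intro v w
    rcases le_total v w with h | h
    · rw [max_eq_left (by linarith), max_eq_right h]; ring
    · rw [max_eq_right (by linarith), max_eq_left h]; ring
  simpa only [e2] using h4

end

/-- The memorization network in the projected space. -/
theorem net_exists {N d m : ℕ} (R : Fin m → Fin d → ℝ) (B : Fin N → Set (Fin d → ℝ))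
    (Y : Fin N → ℕ) (c : Fin N → Fin m → ℝ) (e η : ℝ) (hη : 0 < η)
    (hin : ∀ i, ∀ x ∈ B i, ∀ l, |(∑ j, R l j * x j) - c i l| ≤ e)
    (hout : ∀ i, ∀ x ∈ B i, ∀ j, Y i ≠ Y j → ∃ l, e + η ≤ |(∑ j, R l j * x j) - c j l|) :
    ∃ net : MLP d 1, net.depth = N * (2 * m + 3) + 2 ∧ net.width = m + 6 ∧
      ∀ i, ∀ x ∈ B i, net.eval x 0 = Y i := by
  classical
  let K : Set (Fin d → ℝ) := ⋃ i, B i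
  obtain ⟨M, hM⟩ : ∃ M : ℝ, ∀ i l, e - c i l ≤ M := by
    obtain ⟨M, hM⟩ := (Set.finite_range fun p : Fin N × Fin m => e - c p.1 p.2).bddAbove
    exact ⟨M, fun i l => hM ⟨(i, l), rfl⟩⟩
  let Z : (Fin d → ℝ) → Fin m → ℝ := fun x l => (∑ j, R l j * x j) + M
  have hZ : ∀ x ∈ K, ∀ l, 0 ≤ Z x l := by
    intro x hx l
    obtain ⟨i, hi⟩ := Set.mem_iUnion.1 hx
    have h1 := (abs_le.1 (hin i x hi l)).1
    have h2 := hM i l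
    simp only [Z]; linarith
  have hbase : Reach K (m + 6) 1 fun x => st (Z x) 0 0 0 ((fun _ => 0 : (Fin d → ℝ) → ℝ) x) := by
    refine Reach.first (st_coords (fun l => keep ⟨R l, M, fun x _ => rfl⟩ fun x hx => hZ x hx l)
      ?_ ?_ ?_ ?_) <;> exact keep (AffOf.const 0) fun _ _ => le_rfl
  have main : ∀ n ≤ N, ∃ v : (Fin d → ℝ) → ℝ,
      Reach K (m + 6) (n * (2 * m + 3) + 1) (fun x => st (Z x) 0 0 0 (v x)) ∧
      (∀ x, 0 ≤ v x) ∧ (∀ i, ∀ x ∈ B i, v x ≤ Y i) ∧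
      (∀ i : Fin N, i.1 < n → ∀ x ∈ B i, v x = Y i) := by
    intro n
    induction n with
    | zero =>
      intro _
      exact ⟨fun _ => 0, by simpa using hbase, fun _ => le_rfl, fun i x _ => by positivity,
        fun i hi => absurd hi (by omega)⟩
    | succ n ih =>
      intro hn
      obtain ⟨v, hv, hv0, hle, heq⟩ := ih (by omega)
      let I : Fin N := ⟨n, by omega⟩
      let w : (Fin d → ℝ) → ℝ := fun x =>
        max ((Y I : ℝ) - (Y I : ℝ) / η * ∑ l, tau e (c I l + M) (Z x l)) 0
      have hw : ∀ i, ∀ x ∈ B i, w x ≤ Y i := by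
        intro i x hx
        have hS : 0 ≤ ∑ l, tau e (c I l + M) (Z x l) := Finset.sum_nonneg fun l _ => tau_nonneg _ _ _
        have hk : (0 : ℝ) ≤ (Y I : ℝ) / η := by positivity
        by_cases hY : Y i = Y I
        · rw [hY]
          apply max_le _ (by positivity)
          have := mul_nonneg hk hS
          linarith
        · obtain ⟨l, hl⟩ := hout i x hx I hY
          have h1 : η ≤ tau e (c I l + M) (Z x l) := by
            apply le_tau
            have : Z x l - (c I l + M) = (∑ j, R l j * x j) - c I l := by simp only [Z]; ring
            rwa [this]
          have h2 : η ≤ ∑ l, tau e (c I l + M) (Z x l) :=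
            h1.trans (Finset.single_le_sum (f := fun l => tau e (c I l + M) (Z x l))
              (fun l _ => tau_nonneg _ _ _) (Finset.mem_univ l))
          have h3 := mul_le_mul_of_nonneg_left h2 hk
          rw [div_mul_cancel₀ _ hη.ne'] at h3
          apply max_le _ (by positivity)
          have : (0 : ℝ) ≤ Y i := by positivity
          linarith
      have hwI : ∀ x ∈ B I, w x = Y I := by
        intro x hx
        have : ∑ l, tau e (c I l + M) (Z x l) = 0 := by
          apply Finset.sum_eq_zero
          intro l _
          apply tau_eq_zero
          have : Z x l - (c I l + M) = (∑ j, R l j * x j) - c I l := by simp only [Z]; ring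
          rw [this]; exact hin I x hx l
        simp [w, this]
      refine ⟨fun x => max (v x) (w x), ?_, fun x => le_max_of_le_left (hv0 x),
        fun i x hx => max_le (hle i x hx) (hw i x hx), ?_⟩
      · have := reach_point e (Y I : ℝ) ((Y I : ℝ) / η) (fun l => c I l + M) hZ
          (fun x _ => hv0 x) hv
        have e1 : n * (2 * m + 3) + 1 + (2 * m + 3) = (n + 1) * (2 * m + 3) + 1 := by ring
        rw [e1] at this
        exact this
      · intro i hi x hx
        rcases Nat.lt_succ_iff_lt_or_eq.1 hi with h | h
        · simp only [heq i h x hx]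
          exact max_eq_left (hw i x hx)
        · have : i = I := Fin.ext h
          rw [this] at hx ⊢
          simp only [hwI x hx]
          exact max_eq_right (hle I x hx)
  obtain ⟨v, hv, -, -, heq⟩ := main N le_rfl
  obtain ⟨net, h1, h2, h3⟩ := hv.final AffOf.regV
  exact ⟨net, h1, h2, fun i x hx => by
    rw [h3 x (Set.mem_iUnion.2 ⟨i, hx⟩)]; exact heq i i.2 x hx⟩

theorem dot_le {d : ℕ} (r x : Fin d → ℝ) : |∑ j, r j * x j| ≤ nrm r * nrm x := by
  apply abs_le_of_sq_le_sq
  · rw [mul_pow, nrm_sq, nrm_sq]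
    exact Finset.sum_mul_sq_le_sq_mul_sq _ _ _
  · exact mul_nonneg (Real.sqrt_nonneg _) (Real.sqrt_nonneg _)

/-- The random projection: far points stay separated in some coordinate. -/
theorem projection_exists {N d m : ℕ} {p q : ℝ≥0∞} {σ δ : ℝ} (hN : 2 ≤ N) (hd : 2 ≤ d)
    (hm : 1 ≤ m) (hp : 0 < p) (hq : 1 ≤ q) (hσ : 0 < σ) (hδ : 0 < δ)
    (hratio : σ / δ ≤ (1 / (8 * Real.sqrt (Real.exp 1))) *
            (d : ℝ) ^ (-(1 : ℝ) / 2 + min ((1 : ℝ) / 2 - rinv q) 0 + min (rinv p - 1 / 2) 0) *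
            (N : ℝ) ^ (-(2 : ℝ) / (m : ℝ)))
    (X : Fin N → Fin d → ℝ) (Y : Fin N → ℕ) (hsep : Separated q δ X Y) :
    ∃ (R : Fin m → Fin d → ℝ) (e η : ℝ), 0 < η ∧
      (∀ i, ∀ x ∈ {x | lpNorm p (x - X i) ≤ σ}, ∀ l,
        |(∑ j, R l j * x j) - ∑ j, R l j * X i j| ≤ e) ∧
      (∀ i, ∀ x ∈ {x | lpNorm p (x - X i) ≤ σ}, ∀ i', Y i ≠ Y i' →
        ∃ l, e + η ≤ |(∑ j, R l j * x j) - ∑ j, R l j * X i' j|) := by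
  classical
  have hd0 : (0 : ℝ) < d := by positivity
  have hN0 : (0 : ℝ) < N := by positivity
  have hm0 : (0 : ℝ) < m := by positivity
  set DP := (d : ℝ) ^ (-min (rinv p - 1 / 2) 0) with hDP
  set DQ := (d : ℝ) ^ (min (1 / 2 - rinv q) 0) with hDQ
  set ρ := (N : ℝ) ^ (-(2 : ℝ) / (m : ℝ)) with hρ
  have hDP0 : 0 < DP := by positivity
  have hDQ0 : 0 < DQ := by positivity
  have hρ0 : 0 < ρ := by positivity
  have hsd0 : 0 < Real.sqrt d := Real.sqrt_pos.2 hd0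
  have hse0 : 0 < Real.sqrt (Real.exp 1) := Real.sqrt_pos.2 (Real.exp_pos 1)
  have hρm : ρ ^ m * (N : ℝ) ^ 2 = 1 := by
    rw [hρ, ← Real.rpow_natCast, ← Real.rpow_mul hN0.le, div_mul_cancel₀ _ hm0.ne',
      Real.rpow_neg hN0.le]
    norm_cast
    field_simp
  have hkey : 8 * Real.sqrt (Real.exp 1) * Real.sqrt d * (DP * σ) ≤ ρ * (DQ * δ) := by
    have hsplit : (d : ℝ) ^ (-(1 : ℝ) / 2 + min ((1 : ℝ) / 2 - rinv q) 0 + min (rinv p - 1 / 2) 0)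
        = (Real.sqrt d)⁻¹ * DQ * DP⁻¹ := by
      rw [Real.rpow_add hd0, Real.rpow_add hd0, hDP, Real.rpow_neg hd0.le, inv_inv,
        Real.sqrt_eq_rpow, ← Real.rpow_neg hd0.le, neg_div]
    rw [hsplit, div_le_iff₀ hδ] at hratio
    have h := mul_le_mul_of_nonneg_left hratio
      (by positivity : 0 ≤ 8 * Real.sqrt (Real.exp 1) * Real.sqrt d * DP)
    calc _ = 8 * Real.sqrt (Real.exp 1) * Real.sqrt d * DP * σ := by ring
      _ ≤ _ := h
      _ = _ := by field_simp
  let u : Fin N × Fin N → EuclideanSpace ℝ (Fin d) := fun a => WithLp.toLp 2 (X a.1 - X a.2)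
  let S : Finset (Fin N × Fin N) := Finset.univ.filter fun a => Y a.1 ≠ Y a.2
  have hnorm : ∀ x : EuclideanSpace ℝ (Fin d), ‖x‖ = nrm (fun j => x j) := by
    intro x; rw [EuclideanSpace.norm_eq, nrm]; simp
  have hul : ∀ a ∈ S, DQ * δ ≤ ‖u a‖ := by
    intro a ha
    have h1 := hsep.1 a.1 a.2 (Finset.mem_filter.1 ha).2
    rw [hnorm]
    exact (mul_le_mul_of_nonneg_left h1 hDQ0.le).trans
      (lpQ hd q (lt_of_lt_of_le one_pos hq) (X a.1 - X a.2))
  obtain ⟨r, hr, hcard⟩ := many_rows (by omega : 0 < d) (ρ / 4) (by positivity) u m S (by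
    intro a ha h0
    have := hul a ha
    rw [h0, norm_zero] at this
    have : 0 < DQ * δ := by positivity
    linarith)
  have hempty : (S.filter fun i => ∀ l, |inner ℝ (u i) (r l)| ≤ ρ / 4 * ‖u i‖) = ∅ := by
    rw [← Finset.card_eq_zero]
    have hS : (S.card : ℝ) ≤ (N : ℝ) ^ 2 := by
      have : S.card ≤ N ^ 2 := by
        calc S.card ≤ (Finset.univ : Finset (Fin N × Fin N)).card := Finset.card_filter_le _ _
          _ = N ^ 2 := by simp [sq]
      exact_mod_cast this
    have hlt : (2 * (ρ / 4)) ^ m * (S.card : ℝ) < 1 := by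
      calc (2 * (ρ / 4)) ^ m * (S.card : ℝ) ≤ (2 * (ρ / 4)) ^ m * (N : ℝ) ^ 2 := by gcongr
        _ = (1 / 2) ^ m * (ρ ^ m * (N : ℝ) ^ 2) := by
          rw [← mul_assoc, ← mul_pow]; congr 2; ring
        _ = (1 / 2) ^ m := by rw [hρm, mul_one]
        _ < 1 := pow_lt_one₀ (by norm_num) (by norm_num) (by omega)
    have := hcard.trans_lt hlt
    have h' := Nat.lt_one_iff.1 (by exact_mod_cast this)
    exact h'
  have h2e : Real.sqrt 2 < Real.sqrt (Real.exp 1) := by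
    apply Real.sqrt_lt_sqrt (by norm_num)
    have := Real.exp_one_gt_d9
    linarith
  have hinn : ∀ i, ∀ x ∈ {x | lpNorm p (x - X i) ≤ σ}, ∀ l,
      |∑ j, r l j * (x j - X i j)| ≤ Real.sqrt 2 * Real.sqrt d * (DP * σ) := by
    intro i x hx l
    have h1 : nrm (x - X i) ≤ DP * σ :=
      (lpP hd p hp (x - X i)).trans (mul_le_mul_of_nonneg_left hx hDP0.le)
    have h2 : nrm (fun j => r l j) ≤ Real.sqrt 2 * Real.sqrt d := by
      rw [← hnorm, ← Real.sqrt_mul (by norm_num)]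
      exact Real.le_sqrt_of_sq_le (hr l)
    have h3 := dot_le (fun j => r l j) (x - X i)
    exact h3.trans (mul_le_mul h2 h1 (Real.sqrt_nonneg _) (by positivity))
  refine ⟨fun l j => r l j, Real.sqrt 2 * Real.sqrt d * (DP * σ),
    2 * (Real.sqrt (Real.exp 1) - Real.sqrt 2) * Real.sqrt d * (DP * σ), ?_, ?_, ?_⟩
  · have : 0 < Real.sqrt (Real.exp 1) - Real.sqrt 2 := by linarith
    positivity
  · intro i x hx l
    rw [← Finset.sum_sub_distrib]
    simpa only [mul_sub] using hinn i x hx l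
  · intro i x hx i' hii
    have hmem : (i, i') ∈ S := Finset.mem_filter.2 ⟨Finset.mem_univ _, hii⟩
    have hex : ∃ l, ρ / 4 * ‖u (i, i')‖ < |inner ℝ (u (i, i')) (r l)| := by
      by_contra! hcon
      have : (i, i') ∈ (S.filter fun i => ∀ l, |inner ℝ (u i) (r l)| ≤ ρ / 4 * ‖u i‖) :=
        Finset.mem_filter.2 ⟨hmem, hcon⟩
      rw [hempty] at this
      simp at this
    obtain ⟨l, hl⟩ := hex
    refine ⟨l, ?_⟩
    have hinner : inner ℝ (u (i, i')) (r l) = ∑ j, r l j * (X i j - X i' j) := by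
      simp [u, PiLp.inner_apply]
    rw [hinner] at hl
    have h1 := hinn i x hx l
    have h2 : ρ / 4 * (DQ * δ) ≤ ρ / 4 * ‖u (i, i')‖ :=
      mul_le_mul_of_nonneg_left (hul _ hmem) (by positivity)
    have h3 : (∑ j, r l j * x j) - ∑ j, r l j * X i' j =
        ∑ j, r l j * (x j - X i j) + ∑ j, r l j * (X i j - X i' j) := by
      rw [← Finset.sum_sub_distrib, ← Finset.sum_add_distrib]
      apply Finset.sum_congr rfl; intro j _; ring
    rw [h3]
    have h4 := abs_sub_abs_le_abs_sub (∑ j, r l j * (X i j - X i' j))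
      (-∑ j, r l j * (x j - X i j))
    rw [abs_neg, sub_neg_eq_add, add_comm (∑ j, r l j * (X i j - X i' j))] at h4
    refine le_trans ?_ h4
    nlinarith [hkey, h1, h2, hl]

/-- **Robust memorization with small width, `l_q` separation** (upper bound). -/
theorem robust_memorization_small_width_q :
    ∃ C₀ : ℝ, 0 < C₀ ∧
      ∀ (N d C k : ℕ) (p q : ℝ≥0∞) (σ δ : ℝ),
        2 ≤ N → 2 ≤ d → 2 ≤ C → 0 < p → 1 ≤ q → 7 ≤ k → k ≤ d + 5 → 0 < σ → 0 < δ →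
        σ / δ ≤ (1 / (8 * Real.sqrt (Real.exp 1))) *
            (d : ℝ) ^ (-(1 : ℝ) / 2 + min ((1 : ℝ) / 2 - rinv q) 0 + min (rinv p - 1 / 2) 0) *
            (N : ℝ) ^ (-(2 : ℝ) / ((k : ℝ) - 6)) →
        ∀ (X : Fin N → Fin d → ℝ) (Y : Fin N → ℕ),
          (∀ i, 1 ≤ Y i ∧ Y i ≤ C) → Separated q δ X Y →
          ∃ net : MLP d 1, net.width = k ∧
            (net.depth : ℝ) ≤ C₀ * N * k * Real.logb 2 k ∧
            RobustMem p σ X Y (fun x => net.eval x 0) := by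
  refine ⟨2, by norm_num, ?_⟩
  intro N d C k p q σ δ hN hd hC hp hq hk hkd hσ hδ hratio X Y hY hsep
  obtain ⟨m, rfl⟩ : ∃ m, k = m + 6 := ⟨k - 6, by omega⟩
  have hm : 1 ≤ m := by omega
  obtain ⟨R, e, η, hη, hin, hout⟩ :=
    projection_exists hN hd hm hp hq hσ hδ (by simpa using hratio) X Y hsep
  obtain ⟨net, hdep, hwid, hev⟩ := net_exists R (fun i => {x | lpNorm p (x - X i) ≤ σ}) Y
    (fun i l => ∑ j, R l j * X i j) e η hη hin hout
  refine ⟨net, hwid, ?_, fun i x hx => hev i x hx⟩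
  rw [hdep]
  have hlog : 1 ≤ Real.logb 2 ((m + 6 : ℕ) : ℝ) := by
    rw [Real.le_logb_iff_rpow_le (by norm_num) (by positivity), Real.rpow_one]
    push_cast
    have : (0 : ℝ) ≤ m := by positivity
    linarith
  have h1 : (N * (2 * m + 3) + 2 : ℕ) ≤ 2 * N * (m + 6) := by nlinarith
  calc ((N * (2 * m + 3) + 2 : ℕ) : ℝ) ≤ ((2 * N * (m + 6) : ℕ) : ℝ) := by exact_mod_cast h1
    _ = 2 * N * ((m + 6 : ℕ) : ℝ) * 1 := by push_cast; ring
    _ ≤ _ := by gcongr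

end
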